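/- For n ≥ 2 and m ≥ 1, let G be the graph obtained from the disjoint union K_n ⊔ K_m of two complete graphs by adding one edge between a vertex of K_n and a vertex of K_m (the 'pearled' graph K̃_n K̃_m). Then there is a Marcello step from G to the complete graph on its n + m vertices; i.e., ϖ(K̃_n K̃_m) = 1. -/

import Mathlib

open SimpleGraph

attribute [local instance] Classical.propDecidable

/-- The degree of a vertex. -/
noncomputable def mdeg {V : Type*} (G : SimpleGraph V) (v : V) : ℕ :=
  (G.neighborSet v).ncard

/-- `G'` is obtained from `G` by a Marcello step. -/
def MarcelloStep {V : Type*} [Fintype V] (G G' : SimpleGraph V) : Prop :=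
  G ≤ G' ∧ ∃ f : Sym2 V → V,
    (∀ e ∈ G'.edgeSet \ G.edgeSet, f e ∈ e) ∧
    (∀ v : V, (∃ e ∈ G'.edgeSet \ G.edgeSet, f e = v) →
        0 < mdeg G v ∧ mdeg G v < Fintype.card V - 1) ∧
    (∀ v : V, ((G'.edgeSet \ G.edgeSet) ∩ {e | f e = v}).ncard ≤ mdeg G v)

/-- There is a Marcello chain of length `k` from `G` to `H`. -/
def MarcelloChain {V : Type*} [Fintype V] (G H : SimpleGraph V) (k : ℕ) : Prop :=
  ∃ c : ℕ → SimpleGraph V, c 0 = G ∧ c k = H ∧ ∀ i < k, MarcelloStep (c i) (c (i + 1))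

/-- The Marcello number `ϖ(G)`. -/
noncomputable def marcelloNumber {V : Type*} [Fintype V] (G : SimpleGraph V) : ℕ :=
  sInf {k | MarcelloChain G (⊤ : SimpleGraph V) k}

/-- The sum of degrees over vertices `v` with `0 < deg v < n - 1`. -/
noncomputable def marcelloSum {V : Type*} [Fintype V] (G : SimpleGraph V) : ℕ :=
  ∑ v ∈ Finset.univ.filter
      (fun v => 0 < mdeg G v ∧ mdeg G v < Fintype.card V - 1), mdeg G v

/-!
In a Marcello step only the upper bound on the number of edges initiated by a vertex matters: an
initiator of a new edge is not universal, and having initiated at least one edge it has positive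
degree. So it suffices to distribute the missing edges of the pearled graph, which join the two
cliques, so that each vertex receives at most its clique size minus one. If the cliques have
different sizes, the vertices of the larger one initiate everything. If they have the same size,
the vertices of the first clique initiate all missing edges except those at `b`, which `b`
initiates itself; the pearling edge `ab` saves `b` the one edge too many.
-/

section MarcelloStep

variable {V W : Type*}

lemma mdeg_eq_degree (G : SimpleGraph V) (v : V) [Fintype (G.neighborSet v)] :
    mdeg G v = G.degree v := by
  rw [mdeg, Set.ncard_eq_toFinset_card', Set.toFinset_card, card_neighborSet_eq_degree]

lemma mdeg_top [Finite V] (v : V) : mdeg (⊤ : SimpleGraph V) v = Nat.card V - 1 := by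
  rw [mdeg, neighborSet_top, Set.ncard_compl, Set.ncard_singleton]

lemma mdeg_le_of_copy [Finite W] {G : SimpleGraph V} {H : SimpleGraph W} (f : Copy G H) (v : V) :
    mdeg G v ≤ mdeg H (f v) :=
  Set.ncard_le_ncard_of_injOn f (fun _ hw => f.toHom.map_adj hw) f.injective.injOn

variable [Fintype V] {G G' : SimpleGraph V}

lemma mdeg_lt_card_sub_one {v w : V} (hvw : v ≠ w) (h : ¬G.Adj v w) :
    mdeg G v < Fintype.card V - 1 := by
  rw [mdeg_eq_degree, degree_lt_card_sub_one]
  exact fun hv => h (hv hvw)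

lemma marcelloStep_of_ncard_le (hle : G ≤ G') (f : Sym2 V → V)
    (hf : ∀ e ∈ G'.edgeSet \ G.edgeSet, f e ∈ e)
    (hcard : ∀ v, ((G'.edgeSet \ G.edgeSet) ∩ {e | f e = v}).ncard ≤ mdeg G v) :
    MarcelloStep G G' := by
  refine ⟨hle, f, hf, ?_, hcard⟩
  rintro v ⟨e, he, rfl⟩
  have initiates_pos : 0 < ((G'.edgeSet \ G.edgeSet) ∩ {e' | f e' = f e}).ncard :=
    (Set.ncard_pos).2 ⟨e, he, rfl⟩
  obtain ⟨w, hw⟩ := hf e he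
  have hnew : s(f e, w) ∈ G'.edgeSet \ G.edgeSet := hw ▸ he
  exact ⟨initiates_pos.trans_le (hcard _), mdeg_lt_card_sub_one hnew.1.ne hnew.2⟩

/-- Reading `R v w` as "`v` may initiate the edge `vw`" avoids defining initiators on `Sym2 V`. -/
lemma marcelloStep_of_rel (hle : G ≤ G') (R : V → V → Prop)
    (hR : ∀ v w, (G' \ G).Adj v w → R v w ∨ R w v)
    (hcard : ∀ v, {w | (G' \ G).Adj v w ∧ R v w}.ncard ≤ mdeg G v) :
    MarcelloStep G G' := by
  have exists_initiator (e : Sym2 V) :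
      ∃ v, e ∈ G'.edgeSet \ G.edgeSet → ∃ w, s(v, w) = e ∧ R v w := by
    induction e with | _ x y
    by_cases he : s(x, y) ∈ G'.edgeSet \ G.edgeSet
    · rcases hR x y he with hxy | hyx
      · exact ⟨x, fun _ => ⟨y, rfl, hxy⟩⟩
      · exact ⟨y, fun _ => ⟨x, Sym2.eq_swap, hyx⟩⟩
    · exact ⟨x, fun h => absurd h he⟩
  choose f hf using exists_initiator
  refine marcelloStep_of_ncard_le hle f (fun e he => ?_) fun v => ?_
  · obtain ⟨w, hw, -⟩ := hf e he
    exact ⟨w, hw.symm⟩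
  · have initiated_subset : (G'.edgeSet \ G.edgeSet) ∩ {e | f e = v} ⊆
        (s(v, ·)) '' {w | (G' \ G).Adj v w ∧ R v w} := by
      rintro e ⟨he, rfl⟩
      obtain ⟨w, hw, hRw⟩ := hf e he
      have hnew : s(f e, w) ∈ G'.edgeSet \ G.edgeSet := hw.symm ▸ he
      exact ⟨w, ⟨hnew, hRw⟩, hw⟩
    exact (Set.ncard_le_ncard initiated_subset).trans ((Set.ncard_image_le).trans (hcard v))

end MarcelloStep

section MarcelloNumber

variable {V : Type*} [Fintype V] {G H : SimpleGraph V}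

lemma marcelloChain_zero_iff : MarcelloChain G H 0 ↔ G = H :=
  ⟨fun ⟨_, h₀, h₁, _⟩ => h₀.symm.trans h₁, fun h => ⟨fun _ => G, rfl, h, by simp⟩⟩

lemma MarcelloStep.marcelloChain_one (h : MarcelloStep G H) : MarcelloChain G H 1 := by
  refine ⟨fun i => if i = 0 then G else H, rfl, rfl, fun i hi => ?_⟩
  obtain rfl := Nat.lt_one_iff.1 hi
  exact h

lemma marcelloNumber_eq_one (hG : G ≠ ⊤) (h : MarcelloStep G ⊤) : marcelloNumber G = 1 := by
  refine le_antisymm (Nat.sInf_le h.marcelloChain_one) (Nat.one_le_iff_ne_zero.2 fun h₀ => hG ?_)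
  have chain : marcelloNumber G ∈ {k | MarcelloChain G ⊤ k} := Nat.sInf_mem ⟨1, h.marcelloChain_one⟩
  rwa [h₀, Set.mem_ofPred_eq, marcelloChain_zero_iff] at chain

end MarcelloNumber

section Pearled

variable {α β : Type*}

/-- The graph obtained by pearling `G` and `H`: their disjoint union together with the single edge
joining the vertex `a` of `G` to the vertex `b` of `H`. -/
def pearled (G : SimpleGraph α) (H : SimpleGraph β) (a : α) (b : β) : SimpleGraph (α ⊕ β) :=
  (G ⊕g H) ⊔ fromEdgeSet {s(Sum.inl a, Sum.inr b)}

variable {G : SimpleGraph α} {H : SimpleGraph β} {a : α} {b : β}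

lemma pearled_adj_inl_inl {u u' : α} :
    (pearled G H a b).Adj (Sum.inl u) (Sum.inl u') ↔ G.Adj u u' := by
  simp [pearled]

lemma pearled_adj_inr_inr {v v' : β} :
    (pearled G H a b).Adj (Sum.inr v) (Sum.inr v') ↔ H.Adj v v' := by
  simp [pearled]

lemma pearled_adj_inl_inr {u : α} {v : β} :
    (pearled G H a b).Adj (Sum.inl u) (Sum.inr v) ↔ u = a ∧ v = b := by
  simp [pearled]

lemma pearled_adj_inr_inl {u : α} {v : β} :
    (pearled G H a b).Adj (Sum.inr v) (Sum.inl u) ↔ u = a ∧ v = b := by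
  rw [adj_comm, pearled_adj_inl_inr]

lemma mdeg_le_mdeg_pearled_inl [Finite α] [Finite β] (u : α) :
    mdeg G u ≤ mdeg (pearled G H a b) (Sum.inl u) :=
  mdeg_le_of_copy ((Copy.ofLE _ _ le_sup_left).comp Embedding.sumInl.toCopy) u

lemma mdeg_le_mdeg_pearled_inr [Finite α] [Finite β] (v : β) :
    mdeg H v ≤ mdeg (pearled G H a b) (Sum.inr v) :=
  mdeg_le_of_copy ((Copy.ofLE _ _ le_sup_left).comp Embedding.sumInr.toCopy) v

lemma pearled_ne_top [Fintype α] [Fintype β] (h : 2 < Fintype.card α + Fintype.card β) :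
    pearled G H a b ≠ ⊤ := by
  intro htop
  have eq_endpoints (u : α) (v : β) : u = a ∧ v = b := by
    rw [← pearled_adj_inl_inr (G := G) (H := H), htop]
    exact Sum.inl_ne_inr
  have hα : Fintype.card α ≤ 1 := Fintype.card_le_one_iff.2 fun u u' =>
    (eq_endpoints u b).1.trans (eq_endpoints u' b).1.symm
  have hβ : Fintype.card β ≤ 1 := Fintype.card_le_one_iff.2 fun v v' =>
    (eq_endpoints a v).2.trans (eq_endpoints a v').2.symm
  lia

variable [Fintype α] [Fintype β]

/-- `L u v` says that the missing edge `uv` is initiated by its endpoint `u` in the first clique;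
otherwise `v` initiates it. -/
lemma marcelloStep_pearled_top_of_rel (L : α → β → Prop)
    (hα : ∀ u, {v | ¬(u = a ∧ v = b) ∧ L u v}.ncard < Nat.card α)
    (hβ : ∀ v, {u | ¬(u = a ∧ v = b) ∧ ¬L u v}.ncard < Nat.card β) :
    MarcelloStep (pearled (⊤ : SimpleGraph α) (⊤ : SimpleGraph β) a b) ⊤ := by
  let R : α ⊕ β → α ⊕ β → Prop := Sum.elim (fun u => Sum.elim (fun _ => False) (L u))
    (fun v => Sum.elim (fun u => ¬L u v) (fun _ => False))
  refine marcelloStep_of_rel le_top R ?_ ?_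
  · rintro (u | v) (u' | v') ⟨hne, hnadj⟩
    · exact absurd (pearled_adj_inl_inl.2 fun h => hne (congrArg _ h)) hnadj
    · exact em (L u v')
    · exact (em (L u' v)).symm
    · exact absurd (pearled_adj_inr_inr.2 fun h => hne (congrArg _ h)) hnadj
  · rintro (u | v)
    · have initiated_eq : {w | (⊤ \ pearled ⊤ ⊤ a b).Adj (Sum.inl u) w ∧ R (Sum.inl u) w} =
          Sum.inr '' {v | ¬(u = a ∧ v = b) ∧ L u v} := by
        ext (u' | v) <;> simp [R, pearled_adj_inl_inr]
      rw [initiated_eq, Set.ncard_image_of_injective _ Sum.inr_injective]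
      calc _ ≤ Nat.card α - 1 := Nat.le_sub_one_of_lt (hα u)
        _ = mdeg ⊤ u := (mdeg_top u).symm
        _ ≤ _ := mdeg_le_mdeg_pearled_inl u
    · have initiated_eq : {w | (⊤ \ pearled ⊤ ⊤ a b).Adj (Sum.inr v) w ∧ R (Sum.inr v) w} =
          Sum.inl '' {u | ¬(u = a ∧ v = b) ∧ ¬L u v} := by
        ext (u | v') <;> simp [R, pearled_adj_inr_inl]
      rw [initiated_eq, Set.ncard_image_of_injective _ Sum.inl_injective]
      calc _ ≤ Nat.card β - 1 := Nat.le_sub_one_of_lt (hβ v)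
        _ = mdeg ⊤ v := (mdeg_top v).symm
        _ ≤ _ := mdeg_le_mdeg_pearled_inr v

lemma marcelloStep_pearled_top (a : α) (b : β) :
    MarcelloStep (pearled (⊤ : SimpleGraph α) (⊤ : SimpleGraph β) a b) ⊤ := by
  have : Nonempty α := ⟨a⟩
  have : Nonempty β := ⟨b⟩
  rcases lt_trichotomy (Nat.card α) (Nat.card β) with hlt | heq | hgt
  · exact marcelloStep_pearled_top_of_rel (fun _ _ => False) (by simp [Fintype.card_pos])
      fun _ => (Set.ncard_le_card _).trans_lt hlt
  · refine marcelloStep_pearled_top_of_rel (fun _ v => v ≠ b) (fun u => ?_) fun v => ?_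
    · rw [heq]
      exact Set.ncard_lt_card ((Set.ne_univ_iff_exists_notMem _).2 ⟨b, by simp⟩)
    · rw [← heq]
      exact Set.ncard_lt_card ((Set.ne_univ_iff_exists_notMem _).2 ⟨a, by simp⟩)
  · exact marcelloStep_pearled_top_of_rel (fun _ _ => True)
      (fun _ => (Set.ncard_le_card _).trans_lt hgt) (by simp [Fintype.card_pos])

theorem marcello_pearled_completes_general (a : α) (b : β)
    (hcard : 2 < Fintype.card α + Fintype.card β) :
    MarcelloStep (pearled (⊤ : SimpleGraph α) (⊤ : SimpleGraph β) a b) ⊤ ∧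
      marcelloNumber (pearled (⊤ : SimpleGraph α) (⊤ : SimpleGraph β) a b) = 1 :=
  have step := marcelloStep_pearled_top a b
  ⟨step, marcelloNumber_eq_one (pearled_ne_top hcard) step⟩

end Pearled

/-- One Marcello step completes the graph obtained from `K_n ⊔ K_m` by adding one edge
between a vertex of `K_n` and a vertex of `K_m` (the pearled graph); its
Marcello number is `1`. -/
theorem marcello_pearled_completes (n m : ℕ) (hn : 2 ≤ n) (hm : 1 ≤ m)
    (a : Fin n) (b : Fin m) :
    MarcelloStep
        (((⊤ : SimpleGraph (Fin n)) ⊕g (⊤ : SimpleGraph (Fin m))) ⊔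
          SimpleGraph.fromEdgeSet {s(Sum.inl a, Sum.inr b)})
        (⊤ : SimpleGraph (Fin n ⊕ Fin m)) ∧
      marcelloNumber
        (((⊤ : SimpleGraph (Fin n)) ⊕g (⊤ : SimpleGraph (Fin m))) ⊔
          SimpleGraph.fromEdgeSet {s(Sum.inl a, Sum.inr b)}) = 1 :=
  marcello_pearled_completes_general a b (by simp only [Fintype.card_fin]; lia)
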